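/- Let (M, g) be a Hadamard manifold and let f : M → ℝ be a g-convex differentiable function. Let η > 0, let x ∈ M, and suppose x' ∈ M solves x = Exp_{x'}(η grad f(x')). Then for every z ∈ M, η (f(x) − f(z)) ≤ −(1/2) d(x', z)² + (1/2) d(x, z)² + (η²/2) ‖grad f(x)‖_x². -/

import Mathlib

open scoped RealInnerProductSpace

/-- An abstract Hadamard manifold: a metric space `M` together with tangent
spaces (real inner product spaces), exponential and logarithm (inverse
exponential) maps that are mutually inverse, such that the exponential map is a
radial isometry and satisfies the CAT(0) (non-positive curvature) comparison
inequality. -/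
structure Hadamard (M : Type*) [MetricSpace M] where
  /-- tangent space at each point -/
  T : M → Type*
  [normed : ∀ x, NormedAddCommGroup (T x)]
  [ips : ∀ x, InnerProductSpace ℝ (T x)]
  /-- exponential map at each point -/
  exp : (x : M) → T x → M
  /-- inverse exponential map at each point -/
  log : (x : M) → M → T x
  exp_log : ∀ x y, exp x (log x y) = y
  log_exp : ∀ x v, log x (exp x v) = v
  dist_eq : ∀ x y, dist x y = ‖log x y‖
  comparison : ∀ (x : M) (v w : T x), ‖v - w‖ ≤ dist (exp x v) (exp x w)

attribute [instance] Hadamard.normed Hadamard.ips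

/-- Quasilinearized inner product `⟨→xy, →zw⟩`. -/
noncomputable def qip {M : Type*} [MetricSpace M] (x y z w : M) : ℝ :=
  (dist x w ^ 2 + dist y z ^ 2 - dist x z ^ 2 - dist y w ^ 2) / 2

/-- `f` is differentiable with Riemannian gradient `G`: along every geodesic
`t ↦ Exp_x (t v)` the derivative at `t = 0` is `⟪G x, v⟫`. -/
def HasRGrad {M : Type*} [MetricSpace M] (H : Hadamard M) (f : M → ℝ)
    (G : (x : M) → H.T x) : Prop :=
  ∀ (x : M) (v : H.T x), HasDerivAt (fun t : ℝ => f (H.exp x (t • v))) ⟪G x, v⟫ 0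

/-- Geodesic convexity of `f` (with Riemannian gradient `G`). -/
def GConvex {M : Type*} [MetricSpace M] (H : Hadamard M) (f : M → ℝ)
    (G : (x : M) → H.T x) : Prop :=
  ∀ x y : M, f y + ⟪G y, H.log y x⟫ ≤ f x

/-- `μ`-strong geodesic convexity of `f` (with Riemannian gradient `G`). -/
def StronglyGConvex {M : Type*} [MetricSpace M] (H : Hadamard M) (f : M → ℝ)
    (G : (x : M) → H.T x) (μ : ℝ) : Prop :=
  ∀ x y : M, f y + ⟪G y, H.log y x⟫ + μ / 2 * dist x y ^ 2 ≤ f x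

/-- Geodesic `L`-smoothness of `f` (with Riemannian gradient `G`). -/
def GSmooth {M : Type*} [MetricSpace M] (H : Hadamard M) (f : M → ℝ)
    (G : (x : M) → H.T x) (L : ℝ) : Prop :=
  ∀ x y : M, f y ≤ f x + ⟪G x, H.log x y⟫ + L / 2 * dist x y ^ 2

/-!
Write `x = Exp_{x'} (η v)` with `v` a subgradient at `x'`. Testing `v` against `z` and comparing the
geodesic triangle `x', x, z` with its Euclidean counterpart in the tangent space at `x'` gives the
proximal inequality, whose right-hand side contains the negative term `-d(x', x)² / 2`. The change
of `f` from `x'` to `x` is at most `‖u‖ d(x, x')` for a subgradient `u` at `x`, and after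
multiplication by `η` that negative term absorbs it, at the cost of `η² ‖u‖² / 2`.
-/

namespace Hadamard

variable {M : Type*} [MetricSpace M] (H : Hadamard M)

theorem norm_log_sub_log_le_dist (x y z : M) : ‖H.log x y - H.log x z‖ ≤ dist y z := by
  simpa only [H.exp_log] using H.comparison x (H.log x y) (H.log x z)

theorem dist_sq_add_dist_sq_sub_two_mul_inner_log_le (x y z : M) :
    dist x y ^ 2 + dist x z ^ 2 - 2 * ⟪H.log x y, H.log x z⟫ ≤ dist y z ^ 2 := by
  calc
    dist x y ^ 2 + dist x z ^ 2 - 2 * ⟪H.log x y, H.log x z⟫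
        = ‖H.log x y - H.log x z‖ ^ 2 := by
      rw [norm_sub_sq_real, H.dist_eq, H.dist_eq]
      ring
    _ ≤ dist y z ^ 2 := by
      gcongr
      exact H.norm_log_sub_log_le_dist x y z

/-- The tangent vector `u` is a (global) subgradient of `f` at `x`. This plays the role of the
gradient in proximal steps for nonsmooth `f`. -/
def IsSubgradientAt (f : M → ℝ) (x : M) (u : H.T x) : Prop :=
  ∀ y : M, f x + ⟪u, H.log x y⟫ ≤ f y

namespace IsSubgradientAt

variable {H} {f : M → ℝ} {x x' : M} {u : H.T x} {v : H.T x'} {η : ℝ}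

theorem sub_le_norm_mul_dist (hu : H.IsSubgradientAt f x u) (y : M) :
    f x - f y ≤ ‖u‖ * dist x y := by
  calc
    f x - f y ≤ -⟪u, H.log x y⟫ := by linarith [hu y]
    _ ≤ ‖u‖ * ‖H.log x y‖ := (neg_le_abs _).trans (abs_real_inner_le_norm _ _)
    _ = ‖u‖ * dist x y := by rw [H.dist_eq]

theorem mul_sub_le_norm_sq_add_dist_sq (hu : H.IsSubgradientAt f x u) (hη : 0 ≤ η) (y : M) :
    η * (f x - f y) ≤ η ^ 2 / 2 * ‖u‖ ^ 2 + 1 / 2 * dist x y ^ 2 := by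
  calc
    η * (f x - f y) ≤ η * (‖u‖ * dist x y) := by
      gcongr
      exact hu.sub_le_norm_mul_dist y
    _ ≤ η ^ 2 / 2 * ‖u‖ ^ 2 + 1 / 2 * dist x y ^ 2 := by
      linarith [two_mul_le_add_sq (η * ‖u‖) (dist x y)]

theorem proximal_step_inequality (hv : H.IsSubgradientAt f x' v) (hη : 0 ≤ η)
    (hx : H.exp x' (η • v) = x) (z : M) :
    η * (f x' - f z) ≤
      -(1 / 2) * dist x' z ^ 2 + 1 / 2 * dist x z ^ 2 - 1 / 2 * dist x' x ^ 2 := by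
  have log_eq : H.log x' x = η • v := by rw [← hx, H.log_exp]
  have sub_le_neg_inner : f x' - f z ≤ -⟪v, H.log x' z⟫ := by linarith [hv z]
  calc
    η * (f x' - f z) ≤ η * -⟪v, H.log x' z⟫ := by gcongr
    _ = -⟪H.log x' x, H.log x' z⟫ := by rw [log_eq, real_inner_smul_left, mul_neg]
    _ ≤ -(1 / 2) * dist x' z ^ 2 + 1 / 2 * dist x z ^ 2 - 1 / 2 * dist x' x ^ 2 := by
      linarith [H.dist_sq_add_dist_sq_sub_two_mul_inner_log_le x' x z]

end IsSubgradientAt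

end Hadamard

theorem GConvex.isSubgradientAt {M : Type*} [MetricSpace M] {H : Hadamard M} {f : M → ℝ}
    {G : (x : M) → H.T x} (hconv : GConvex H f G) (x : M) : H.IsSubgradientAt f x (G x) :=
  fun y => hconv y x

theorem proximal_step_inequality_at_start_general {M : Type*} [MetricSpace M] {H : Hadamard M}
    {f : M → ℝ} {x x' : M} {u : H.T x} {v : H.T x'} {η : ℝ}
    (hu : H.IsSubgradientAt f x u) (hv : H.IsSubgradientAt f x' v) (hη : 0 ≤ η)
    (hx : H.exp x' (η • v) = x) (z : M) :
    η * (f x - f z) ≤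
      -(1 / 2) * dist x' z ^ 2 + 1 / 2 * dist x z ^ 2 + η ^ 2 / 2 * ‖u‖ ^ 2 := by
  have change_along_step := hu.mul_sub_le_norm_sq_add_dist_sq hη x'
  have proximal_inequality := hv.proximal_step_inequality hη hx z
  rw [dist_comm x x'] at change_along_step
  linarith

/-- if `x'` solves `x = Exp_{x'} (η grad f x')`, then for every `z`,
`η (f x − f z) ≤ −(1/2) d(x',z)² + (1/2) d(x,z)² + (η²/2) ‖grad f x‖²`. -/
theorem proximal_step_inequality_at_start
    {M : Type*} [MetricSpace M] (H : Hadamard M) (f : M → ℝ) (G : (x : M) → H.T x)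
    (hf : HasRGrad H f G) (hconv : GConvex H f G)
    (η : ℝ) (hη : 0 < η) (x x' : M) (hx' : H.exp x' (η • G x') = x) :
    ∀ z : M, η * (f x - f z) ≤
      -(1 / 2) * dist x' z ^ 2 + 1 / 2 * dist x z ^ 2 + η ^ 2 / 2 * ‖G x‖ ^ 2 :=
  proximal_step_inequality_at_start_general (hconv.isSubgradientAt x)
    (hconv.isSubgradientAt x') hη.le hx'
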